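/- For any set Z, Hechler's poset H_Z for adding an almost disjoint family has the Knaster property: every uncountable set of conditions of H_Z contains an uncountable subset of pairwise compatible conditions. -/

import Mathlib

universe u

/-- A condition of Hechler's poset `H_Z` for adding an almost disjoint family: a function
`p : F_p × n_p → 2` with `F_p ⊆ Z` finite and `n_p ∈ ℕ`, where `n_p = 0` iff `F_p = ∅`.
The partial function is represented by a total function `f : Z → ℕ → Bool` which is
`false` outside the domain `F × [0, n)`. -/
structure HechlerCond (Z : Type u) where
  F : Finset Z
  n : ℕ
  f : Z → ℕ → Bool
  supp : ∀ z i, f z i = true → z ∈ F ∧ i < n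
  nz : n = 0 ↔ F = ∅

/-- The order of `H_Z`: `q ≤ p` iff `p ⊆ q` (as partial functions) and for every
`i` with `n_p ≤ i < n_q` there is at most one `z ∈ F_p` with `q(z, i) = 1`. -/
def HechlerLe {Z : Type u} (q p : HechlerCond Z) : Prop :=
  p.F ⊆ q.F ∧ p.n ≤ q.n ∧
  (∀ z ∈ p.F, ∀ i < p.n, q.f z i = p.f z i) ∧
  ∀ i : ℕ, p.n ≤ i → i < q.n → (p.F.filter fun z => q.f z i = true).card ≤ 1

lemma hech_pigeon {I : Type*} {C : Type*} [Countable C] (A : Set I) (hA : ¬ A.Countable)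
    (g : I → C) : ∃ c, ¬ (A ∩ {i | g i = c}).Countable := by
  by_contra h
  push Not at h
  apply hA
  refine (Set.countable_iUnion h).mono ?_
  intro i hi
  exact Set.mem_iUnion.2 ⟨g i, hi, rfl⟩

lemma hech_disj {I Z : Type*} (A : Set I) (hA : ¬ A.Countable) (F : I → Finset Z)
    (hz : ∀ z, (A ∩ {i | z ∈ F i}).Countable) :
    ∃ B ⊆ A, ¬ B.Countable ∧ B.Pairwise fun i j => ∀ z, z ∈ F i → z ∉ F j := by
  obtain ⟨B, hB⟩ := zorn_subset
    {B : Set I | B ⊆ A ∧ B.Pairwise fun i j => ∀ z, z ∈ F i → z ∉ F j} (by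
      intro c hc hch
      refine ⟨⋃₀ c, ⟨Set.sUnion_subset fun s hs => (hc hs).1, ?_⟩,
        fun s hs => Set.subset_sUnion_of_mem hs⟩
      rw [Set.pairwise_sUnion hch.directedOn]
      exact fun s hs => (hc hs).2)
  refine ⟨B, hB.prop.1, ?_, hB.prop.2⟩
  intro hBc
  apply hA
  have hU : (⋃ i ∈ B, (F i : Set Z)).Countable :=
    hBc.biUnion fun i _ => (F i).countable_toSet
  have hV := hU.biUnion fun z _ => hz z
  refine (hBc.union hV).mono ?_
  intro i hi
  by_contra hn
  rw [Set.mem_union, not_or] at hn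
  obtain ⟨h1, h2⟩ := hn
  have h3 : ∀ j ∈ B, ∀ z, z ∈ F j → z ∉ F i := by
    intro j hj z hzj hzi
    apply h2
    simp only [Set.mem_iUnion]
    exact ⟨z, ⟨j, hj, hzj⟩, hi, hzi⟩
  have h4 : insert i B ∈ {B : Set I | B ⊆ A ∧
      B.Pairwise fun i j => ∀ z, z ∈ F i → z ∉ F j} := by
    refine ⟨Set.insert_subset hi hB.prop.1, ?_⟩
    rw [Set.pairwise_insert]
    exact ⟨hB.prop.2, fun j hj _ => ⟨fun z a b => h3 j hj z b a, h3 j hj⟩⟩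
  exact h1 (hB.le_of_ge h4 (Set.subset_insert i B) (Set.mem_insert i B))

lemma hech_main {I Z C : Type*} [Countable C] (c : I → Z → C) (k : ℕ) :
    ∀ (A : Set I) (_ : ¬ A.Countable) (F : I → Finset Z) (_ : ∀ i ∈ A, (F i).card = k),
    ∃ B ⊆ A, ¬ B.Countable ∧ ∀ i ∈ B, ∀ j ∈ B, ∀ z, z ∈ F i → z ∈ F j → c i z = c j z := by
  classical
  induction k with
  | zero =>
    intro A hA F hF
    refine ⟨A, subset_rfl, hA, ?_⟩
    intro i hi j hj z hz
    have := Finset.card_eq_zero.1 (hF i hi)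
    simp [this] at hz
  | succ k ih =>
    intro A hA F hF
    by_cases hz : ∀ z, (A ∩ {i | z ∈ F i}).Countable
    · obtain ⟨B, hBA, hB, hp⟩ := hech_disj A hA F hz
      refine ⟨B, hBA, hB, fun i hi j hj z h1 h2 => ?_⟩
      by_cases hij : i = j
      · rw [hij]
      · exact absurd h2 (hp hi hj hij z h1)
    · push Not at hz
      obtain ⟨w, hw⟩ := hz
      obtain ⟨d, hd⟩ := hech_pigeon _ hw (fun i => c i w)
      obtain ⟨B, hBA, hB, hp⟩ := ih _ hd (fun i => (F i).erase w) (by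
        rintro i ⟨⟨hi, hwi⟩, -⟩
        rw [Finset.card_erase_of_mem hwi, hF i hi]; rfl)
      refine ⟨B, fun i hi => (hBA hi).1.1, hB, fun i hi j hj z h1 h2 => ?_⟩
      by_cases hzw : z = w
      · subst hzw
        exact (hBA hi).2.trans (hBA hj).2.symm
      · exact hp i hi j hj z (Finset.mem_erase.2 ⟨hzw, h1⟩) (Finset.mem_erase.2 ⟨hzw, h2⟩)

/-- For any set `Z`, Hechler's poset `H_Z` for adding an almost
disjoint family has the Knaster property: every uncountable set of conditions contains
an uncountable subset of pairwise compatible conditions. -/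
theorem stmt_19 {Z : Type u} (A : Set (HechlerCond Z)) (hA : ¬ A.Countable) :
    ∃ B ⊆ A, ¬ B.Countable ∧ ∀ p ∈ B, ∀ q ∈ B,
      ∃ r : HechlerCond Z, HechlerLe r p ∧ HechlerLe r q := by
  classical
  obtain ⟨⟨n, k⟩, hnk⟩ := hech_pigeon A hA (fun p => (p.n, p.F.card))
  obtain ⟨B, hBA, hB, hp⟩ := hech_main
    (fun (p : HechlerCond Z) z => (Finset.range p.n).filter fun i => p.f z i = true) k _ hnk
    (fun p => p.F) (by rintro p ⟨_, h⟩; exact (Prod.mk.inj h).2)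
  refine ⟨B, fun i hi => (hBA hi).1, hB, fun p hpB q hqB => ?_⟩
  have hn : p.n = q.n :=
    (Prod.mk.inj (hBA hpB).2).1.trans (Prod.mk.inj (hBA hqB).2).1.symm
  have key : ∀ z, z ∈ p.F → z ∈ q.F → ∀ i < p.n, p.f z i = q.f z i := by
    intro z h1 h2 i hi
    have h := Finset.ext_iff.1 (hp p hpB q hqB z h1 h2) i
    simp only [Finset.mem_filter, Finset.mem_range, hi, hn ▸ hi, true_and] at h
    exact Bool.eq_iff_iff.2 h
  have hp0 : ∀ z, z ∉ p.F → ∀ i, p.f z i = false := fun z hz i => by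
    by_contra h
    exact hz (p.supp z i (by simpa using h)).1
  have hq0 : ∀ z, z ∉ q.F → ∀ i, q.f z i = false := fun z hz i => by
    by_contra h
    exact hz (q.supp z i (by simpa using h)).1
  refine ⟨⟨p.F ∪ q.F, p.n, fun z i => p.f z i || q.f z i, ?_, ?_⟩, ?_, ?_⟩
  · intro z i h
    rw [Bool.or_eq_true] at h
    rcases h with h | h
    · exact ⟨Finset.mem_union_left _ (p.supp z i h).1, (p.supp z i h).2⟩
    · exact ⟨Finset.mem_union_right _ (q.supp z i h).1, hn ▸ (q.supp z i h).2⟩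
  · rw [Finset.union_eq_empty, ← p.nz, ← q.nz, ← hn, and_self]
  · refine ⟨Finset.subset_union_left, le_rfl, ?_, fun i h1 h2 => absurd h2 (not_lt.2 h1)⟩
    intro z hz i hi
    by_cases hzq : z ∈ q.F
    · simp [key z hz hzq i hi]
    · simp [hq0 z hzq i]
  · refine ⟨Finset.subset_union_right, hn.ge, ?_,
      fun i h1 h2 => absurd h2 (not_lt.2 (hn.le.trans h1))⟩
    intro z hz i hi
    by_cases hzp : z ∈ p.F
    · simp [key z hzp hz i (hn ▸ hi)]
    · simp [hp0 z hzp i]
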